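/- Let r⁻, r⁺ ∈ ℝ with r⁻ ≠ r⁺, and set a := (r⁻ + r⁺)/2, j := r⁺ − r⁻. Then the entropy-dissipation coefficient of the Godunov flux, D^RP := (f^EC(r⁻, r⁺) − f^God(r⁻, r⁺)) / j, satisfies the two-sided bound (1/48)·(|a| + |j|) ≤ D^RP ≤ |a| + |j|; in particular D^RP is comparable to |a| + |j|. -/

import Mathlib

/-!
Write `p`, `q` for the left and right states, `a = (p + q)/2`, `j = q - p`. Then
`fEC p q = a²/2 + j²/24`, and the Godunov flux takes one of three values.

* If it is upwinded from the left, it is `p²/2 = (a - j/2)²/2`, and the dissipation coefficient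
  is `a/2 - j/12`. This happens for `0 ≤ p < q` (where `a ≥ j/2`) and for shocks with `a ≥ 0`.
* If it is upwinded from the right, it is `q²/2` and the coefficient is `-a/2 - j/12`; this is
  the mirror image of the first case under `(p, q) ↦ (-q, -p)`.
* For a transonic rarefaction `p ≤ 0 ≤ q` it vanishes and the coefficient is `a²/(2j) + j/24`
  with `|a| ≤ j/2`.

In the linear cases the bounds are immediate. In the transonic case the lower bound, multiplied
by `48 j`, is `|a| j + j² ≤ 24 a² + 2 j²`, a definite quadratic form, and the upper bound follows
from `a² ≤ j²/4`.
-/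

/-- Second-order entropy-conservative numerical flux for the Burgers equation. -/
noncomputable def fEC (a b : ℝ) : ℝ := (1/24) * (12 * ((a + b)/2)^2 + (b - a)^2)

/-- Godunov flux for the Burgers equation. -/
noncomputable def fGod (a b : ℝ) : ℝ := (1/2) * max ((max a 0)^2) ((min b 0)^2)

theorem fGod_of_left {p q : ℝ} (hp : 0 ≤ p) (hq : -p ≤ q) : fGod p q = p ^ 2 / 2 := by
  have h : (min q 0) ^ 2 ≤ p ^ 2 := by
    apply sq_le_sq'
    · exact le_min hq (by linarith)
    · exact (min_le_right _ _).trans hp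
  rw [fGod, max_eq_left hp, max_eq_left h]
  ring

theorem fGod_neg_swap (p q : ℝ) : fGod (-q) (-p) = fGod p q := by
  have h1 : max (-q) 0 = -min q 0 := by rw [← max_neg_neg, neg_zero]
  have h2 : min (-p) 0 = -max p 0 := by rw [← min_neg_neg, neg_zero]
  rw [fGod, fGod, h1, h2, neg_sq, neg_sq, max_comm]

theorem fEC_neg_swap (p q : ℝ) : fEC (-q) (-p) = fEC p q := by
  unfold fEC
  ring

theorem fGod_transonic {p q : ℝ} (hp : p ≤ 0) (hq : 0 ≤ q) : fGod p q = 0 := by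
  simp [fGod, hp, hq]

/-- The bounds for a nonnegative mean state, to which reflection reduces the general case. -/
theorem dissipation_bounds_of_nonneg {p q : ℝ} (hne : p ≠ q) (ha : 0 ≤ (p + q) / 2) :
    (1/48) * (|(p + q) / 2| + |q - p|) ≤ (fEC p q - fGod p q) / (q - p) ∧
      (fEC p q - fGod p q) / (q - p) ≤ |(p + q) / 2| + |q - p| := by
  have hj : q - p ≠ 0 := sub_ne_zero.mpr hne.symm
  rw [abs_of_nonneg ha]
  rcases le_total 0 p with hp | hp
  · have key : (fEC p q - fGod p q) / (q - p) = (p + q) / 2 / 2 - (q - p) / 12 := by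
      rw [fGod_of_left hp (by linarith), fEC, div_eq_iff hj]
      ring
    rw [key]
    rcases abs_cases (q - p) with ⟨h, h'⟩ | ⟨h, h'⟩ <;> rw [h] <;> constructor <;> linarith
  · have hpos : 0 < q - p := lt_of_le_of_ne (by linarith) hj.symm
    rw [fGod_transonic hp (by linarith), fEC, abs_of_pos hpos, le_div_iff₀ hpos, div_le_iff₀ hpos]
    constructor
    · nlinarith [sq_nonneg ((p + q) / 2 - (q - p) / 48), sq_nonneg (q - p)]
    · -- the mean state lies between `0` and `j/2`
      have h : 0 ≤ (p + q) / 2 * ((q - p) / 2 - (p + q) / 2) :=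
        mul_nonneg ha (by linarith)
      nlinarith [sq_nonneg (q - p), mul_nonneg ha hpos.le]

theorem stmt_9 (rm rp : ℝ) (hne : rm ≠ rp)
    (a j : ℝ) (ha : a = (rm + rp)/2) (hj : j = rp - rm)
    (DRP : ℝ) (hDRP : DRP = (fEC rm rp - fGod rm rp) / j) :
    (1/48) * (|a| + |j|) ≤ DRP ∧ DRP ≤ |a| + |j| := by
  subst hDRP ha hj
  rcases le_total 0 ((rm + rp) / 2) with h | h
  · exact dissipation_bounds_of_nonneg hne h
  · have key := dissipation_bounds_of_nonneg (p := -rp) (q := -rm)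
      (fun e => hne (neg_injective e).symm) (by linarith)
    have e1 : (-rp + -rm) / 2 = -((rm + rp) / 2) := by ring
    have e2 : -rm - -rp = rp - rm := by ring
    rwa [fEC_neg_swap, fGod_neg_swap, e1, e2, abs_neg] at key
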